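/- In the Gaussian neighborhood model, if 2n₀ ≥ n, then for all w, w' ∈ [0,1]: CS(w) > CS(w') if and only if LCS(w) > LCS(w'). -/

import Mathlib

/-!
For a mean `a ≥ 0` and variance `v > 0`, the likelihood ratio of `N(a, v)` to `N(-a, v)` is at
least `1` on `(0, ∞)` and at most `1` on `(-∞, 0]`, because the density decreases with the distance
to the mean (`gaussianReal_apply_le_of_sq_le`); hence `A = (0, ∞)` is a Bayes-optimal acceptance
region. Standardising, the optimal value is
`½·γ((-r, ∞)) + ½·γ((-∞, r])` with `γ = N(0, 1)` and `r = a / √v` (`sepGauss_eq`), which is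
strictly increasing in `r` because `γ` charges every nondegenerate interval
(`stdAccuracy_strictMono`). Swapping `A` with its complement shows that the separability depends
on the mean only through its absolute value, so `CS(w)` is a strictly increasing function of
`|m(w)| / √v(w)`. Since `LCS(w) = 4·(|m(w)| / √v(w))²`, the two indices induce the same order.
-/

open MeasureTheory ProbabilityTheory
open scoped ENNReal NNReal

/-- Mean `m(w) = μ·(1 − 2w(n−n₀)/n)` of the class-`C₀` embedding in the Gaussian
neighborhood model. -/
noncomputable def mW (μ : ℝ) (n n₀ : ℕ) (w : ℝ) : ℝ :=
  μ * (1 - 2 * w * ((n : ℝ) - n₀) / n)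

/-- Variance `v(w) = σ²·((1−w)² + w²/n)` of the embedding in the Gaussian
neighborhood model. -/
noncomputable def vW (σ : ℝ) (n : ℕ) (w : ℝ) : ℝ :=
  σ ^ 2 * ((1 - w) ^ 2 + w ^ 2 / n)

/-- Class-conditional embedding law `P₀(w) = N(m(w), v(w))` of a class-`C₀` node. -/
noncomputable def P0 (μ σ : ℝ) (n n₀ : ℕ) (w : ℝ) : Measure ℝ :=
  gaussianReal (mW μ n n₀ w) (Real.toNNReal (vW σ n w))

/-- Class-conditional embedding law `P₁(w) = N(−m(w), v(w))` of a class-`C₁` node. -/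
noncomputable def P1 (μ σ : ℝ) (n n₀ : ℕ) (w : ℝ) : Measure ℝ :=
  gaussianReal (-(mW μ n n₀ w)) (Real.toNNReal (vW σ n w))

/-- Class separability: one minus the Bayes error rate of the Bayes classifier
for equal class priors, i.e. the supremum over measurable sets `A ⊆ ℝ` of
`½·P₀(w)(A) + ½·P₁(w)(Aᶜ)`. -/
noncomputable def CS (μ σ : ℝ) (n n₀ : ℕ) (w : ℝ) : ℝ≥0∞ :=
  ⨆ (A : Set ℝ) (_ : MeasurableSet A),
    (1 / 2 : ℝ≥0∞) * P0 μ σ n n₀ w A + (1 / 2 : ℝ≥0∞) * P1 μ σ n n₀ w Aᶜ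

/-- Latent-class separability: the two-class Calinski–Harabasz-type index
`LCS(w) = (E_{P₀(w)}[x] − E_{P₁(w)}[x])² / (½·(Var_{P₀(w)}(x) + Var_{P₁(w)}(x)))`. -/
noncomputable def LCS (μ σ : ℝ) (n n₀ : ℕ) (w : ℝ) : ℝ :=
  ((∫ x, x ∂(P0 μ σ n n₀ w)) - ∫ x, x ∂(P1 μ σ n n₀ w)) ^ 2
    / ((variance id (P0 μ σ n n₀ w) + variance id (P1 μ σ n n₀ w)) / 2)

/-- The Bayes accuracy, with equal priors, for separating `N(a, v)` from `N(-a, v)`. -/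
noncomputable def sepGauss (a : ℝ) (v : ℝ≥0) : ℝ≥0∞ :=
  ⨆ (A : Set ℝ) (_ : MeasurableSet A),
    (1 / 2 : ℝ≥0∞) * gaussianReal a v A + (1 / 2 : ℝ≥0∞) * gaussianReal (-a) v Aᶜ

/-- The accuracy of the threshold classifier at `0` for `N(r, 1)` against `N(-r, 1)`, written in
terms of the standard Gaussian. -/
noncomputable def stdAccuracy (r : ℝ) : ℝ≥0∞ :=
  (1 / 2 : ℝ≥0∞) * gaussianReal 0 1 (Set.Ioi (-r))
    + (1 / 2 : ℝ≥0∞) * gaussianReal 0 1 (Set.Iic r)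

lemma sepGauss_neg (a : ℝ) (v : ℝ≥0) : sepGauss (-a) v = sepGauss a v := by
  have key : ∀ b : ℝ, sepGauss (-b) v ≤ sepGauss b v := by
    intro b
    refine iSup₂_le fun A hA => ?_
    refine le_trans (le_of_eq ?_) (le_iSup₂ (f := fun (A : Set ℝ) (_ : MeasurableSet A) =>
      (1 / 2 : ℝ≥0∞) * gaussianReal b v A + (1 / 2 : ℝ≥0∞) * gaussianReal (-b) v Aᶜ)
      Aᶜ hA.compl)
    simp only [neg_neg, compl_compl]
    rw [add_comm]
  exact le_antisymm (key a) (by simpa using key (-a))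

lemma sepGauss_abs (a : ℝ) (v : ℝ≥0) : sepGauss |a| v = sepGauss a v := by
  rcases abs_choice a with h | h <;> rw [h]
  exact sepGauss_neg a v

/-- Of two Gaussians with equal variance, the one whose mean is closer to every point of `S` gives
`S` at least as much mass. -/
lemma gaussianReal_apply_le_of_sq_le {a b : ℝ} {v : ℝ≥0} (hv : v ≠ 0) {S : Set ℝ}
    (hS : MeasurableSet S) (h : ∀ x ∈ S, (x - a) ^ 2 ≤ (x - b) ^ 2) :
    gaussianReal b v S ≤ gaussianReal a v S := by
  rw [gaussianReal_apply _ hv, gaussianReal_apply _ hv]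
  refine setLIntegral_mono' hS fun x hx => ?_
  refine ENNReal.ofReal_le_ofReal ?_
  unfold gaussianPDFReal
  have := h x hx
  gcongr

/-- A Gaussian is the image of the standard one under `x ↦ √v * x + a`. -/
lemma gaussianReal_eq_map_std (a : ℝ) (v : ℝ≥0) :
    gaussianReal a v = (gaussianReal 0 1).map (fun x => √(v : ℝ) * x + a) := by
  have h1 : (fun x : ℝ => √(v : ℝ) * x + a) = (fun x => x + a) ∘ (fun x => √(v : ℝ) * x) := rfl
  rw [h1, ← Measure.map_map (by fun_prop) (by fun_prop), gaussianReal_map_const_mul,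
    gaussianReal_map_add_const]
  congr 1
  · simp
  · ext; simp

lemma gaussianReal_Ioi_zero (a : ℝ) {v : ℝ≥0} (hv : v ≠ 0) :
    gaussianReal a v (Set.Ioi 0) = gaussianReal 0 1 (Set.Ioi (-(a / √(v : ℝ)))) := by
  have hs : 0 < √(v : ℝ) := Real.sqrt_pos.2 (by positivity)
  rw [gaussianReal_eq_map_std, Measure.map_apply (by fun_prop) measurableSet_Ioi]
  congr 1
  ext x
  simp only [Set.mem_preimage, Set.mem_Ioi]
  rw [← neg_div, div_lt_iff₀ hs]
  constructor <;> intro h <;> linarith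

lemma gaussianReal_Iic_zero (a : ℝ) {v : ℝ≥0} (hv : v ≠ 0) :
    gaussianReal (-a) v (Set.Iic 0) = gaussianReal 0 1 (Set.Iic (a / √(v : ℝ))) := by
  have hs : 0 < √(v : ℝ) := Real.sqrt_pos.2 (by positivity)
  rw [gaussianReal_eq_map_std, Measure.map_apply (by fun_prop) measurableSet_Iic]
  congr 1
  ext x
  simp only [Set.mem_preimage, Set.mem_Iic]
  rw [le_div_iff₀ hs]
  constructor <;> intro h <;> linarith

/-- For a nonnegative mean, the half-line `(0, ∞)` is a Bayes-optimal acceptance region. -/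
lemma sepGauss_eq {a : ℝ} (ha : 0 ≤ a) {v : ℝ≥0} (hv : v ≠ 0) :
    sepGauss a v = stdAccuracy (a / √(v : ℝ)) := by
  unfold stdAccuracy
  rw [← gaussianReal_Ioi_zero a hv, ← gaussianReal_Iic_zero a hv]
  apply le_antisymm
  · refine iSup₂_le fun A hA => ?_
    rw [← mul_add, ← mul_add]
    gcongr 1 / 2 * ?_
    -- On `Aᶜ ∩ (0, ∞)` and on `A ∩ (-∞, 0]`, where `A` and `(0, ∞)` disagree, `A` picks the class
    -- of smaller or equal density.
    have hI : MeasurableSet (Set.Ioi (0 : ℝ)) := measurableSet_Ioi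
    have h1 : gaussianReal (-a) v (Aᶜ ∩ Set.Ioi 0) ≤ gaussianReal a v (Aᶜ ∩ Set.Ioi 0) := by
      refine gaussianReal_apply_le_of_sq_le hv (hA.compl.inter hI) fun x hx => ?_
      have : 0 < x := hx.2
      nlinarith [mul_nonneg ha this.le]
    have h2 : gaussianReal a v (A \ Set.Ioi 0) ≤ gaussianReal (-a) v (A \ Set.Ioi 0) := by
      refine gaussianReal_apply_le_of_sq_le hv (hA.diff hI) fun x hx => ?_
      have : x ≤ 0 := not_lt.1 hx.2
      nlinarith [mul_nonneg ha (neg_nonneg.2 this)]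
    have e1 : gaussianReal a v (Set.Ioi 0)
        = gaussianReal a v (A ∩ Set.Ioi 0) + gaussianReal a v (Aᶜ ∩ Set.Ioi 0) := by
      rw [← measure_inter_add_sdiff (Set.Ioi (0 : ℝ)) hA, Set.inter_comm, Set.sdiff_eq,
        Set.inter_comm _ Aᶜ]
    have e2 : gaussianReal (-a) v (Set.Iic 0)
        = gaussianReal (-a) v (A \ Set.Ioi 0) + gaussianReal (-a) v (Aᶜ \ Set.Ioi 0) := by
      rw [← measure_inter_add_sdiff (Set.Iic (0 : ℝ)) hA, Set.sdiff_eq A, Set.sdiff_eq Aᶜ,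
        Set.sdiff_eq (Set.Iic 0), Set.compl_Ioi, Set.inter_comm, Set.inter_comm _ Aᶜ]
    rw [← measure_inter_add_sdiff A hI, ← measure_inter_add_sdiff Aᶜ hI, e1, e2]
    calc _ ≤ gaussianReal a v (A ∩ Set.Ioi 0) + gaussianReal (-a) v (A \ Set.Ioi 0)
          + (gaussianReal a v (Aᶜ ∩ Set.Ioi 0) + gaussianReal (-a) v (Aᶜ \ Set.Ioi 0)) := by
          gcongr
      _ = _ := by ring
  · refine le_trans (le_of_eq ?_) (le_iSup₂ (f := fun (A : Set ℝ) (_ : MeasurableSet A) =>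
      (1 / 2 : ℝ≥0∞) * gaussianReal a v A + (1 / 2 : ℝ≥0∞) * gaussianReal (-a) v Aᶜ)
      (Set.Ioi 0) measurableSet_Ioi)
    simp only [Set.compl_Ioi]

lemma stdAccuracy_strictMono : StrictMono stdAccuracy := by
  intro r s hrs
  unfold stdAccuracy
  have h1 : gaussianReal 0 1 (Set.Iic r) < gaussianReal 0 1 (Set.Iic s) := by
    have hpos : gaussianReal 0 1 (Set.Ioc r s) ≠ 0 := by
      intro h0
      have h2 := gaussianReal_absolutelyContinuous' 0 (one_ne_zero (α := ℝ≥0)) h0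
      rw [Real.volume_Ioc, ENNReal.ofReal_eq_zero] at h2
      linarith
    rw [← Set.Iic_union_Ioc_eq_Iic hrs.le,
      measure_union (Set.Iic_disjoint_Ioc le_rfl) measurableSet_Ioc]
    exact ENNReal.lt_add_right (measure_ne_top _ _) hpos
  have h2 : gaussianReal 0 1 (Set.Ioi (-r)) ≤ gaussianReal 0 1 (Set.Ioi (-s)) :=
    measure_mono (Set.Ioi_subset_Ioi (by linarith))
  refine ENNReal.add_lt_add_of_le_of_lt ?_ (by gcongr) ?_
  · exact ENNReal.mul_ne_top (by simp) (measure_ne_top _ _)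
  · exact (ENNReal.mul_lt_mul_iff_right (by simp) (by simp)).2 h1

lemma vW_pos {σ : ℝ} (hσ : 0 < σ) {n : ℕ} (hn : 1 ≤ n) (w : ℝ) : 0 < vW σ n w := by
  have hn' : (0 : ℝ) < n := by exact_mod_cast hn
  unfold vW
  refine mul_pos (by positivity) ?_
  rcases eq_or_ne w 0 with rfl | hw
  · norm_num
  · positivity

lemma CS_eq {μ σ : ℝ} (hσ : 0 < σ) {n n₀ : ℕ} (hn : 1 ≤ n) (w : ℝ) :
    CS μ σ n n₀ w = stdAccuracy (|mW μ n n₀ w| / √(vW σ n w)) := by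
  have hv := vW_pos hσ hn w
  have h1 : CS μ σ n n₀ w = sepGauss (mW μ n n₀ w) (vW σ n w).toNNReal := rfl
  rw [h1, ← sepGauss_abs, sepGauss_eq (abs_nonneg _) (by simpa using hv),
    Real.coe_toNNReal _ hv.le]

lemma LCS_eq {μ σ : ℝ} (hσ : 0 < σ) {n n₀ : ℕ} (hn : 1 ≤ n) (w : ℝ) :
    LCS μ σ n n₀ w = 4 * (|mW μ n n₀ w| / √(vW σ n w)) ^ 2 := by
  have hv := vW_pos hσ hn w
  unfold LCS P0 P1
  rw [integral_id_gaussianReal, integral_id_gaussianReal, variance_id_gaussianReal,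
    variance_id_gaussianReal, Real.coe_toNNReal _ hv.le, div_pow, sq_abs, Real.sq_sqrt hv.le]
  field_simp
  ring

/-- In the Gaussian neighborhood model, if `2n₀ ≥ n`, then for
all `w, w' ∈ [0,1]`: `CS(w) > CS(w')` if and only if `LCS(w) > LCS(w')`. -/
theorem CS_gt_iff_LCS_gt_of_two_n₀_ge (μ σ : ℝ) (hμ : μ ≠ 0) (hσ : 0 < σ)
    (n n₀ : ℕ) (hn : 1 ≤ n) (hn₀ : n₀ ≤ n) (h : n ≤ 2 * n₀)
    (w w' : ℝ) (hw : w ∈ Set.Icc (0 : ℝ) 1) (hw' : w' ∈ Set.Icc (0 : ℝ) 1) :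
    CS μ σ n n₀ w > CS μ σ n n₀ w' ↔ LCS μ σ n n₀ w > LCS μ σ n n₀ w' := by
  rw [CS_eq hσ hn, CS_eq hσ hn, LCS_eq hσ hn, LCS_eq hσ hn, gt_iff_lt, gt_iff_lt,
    stdAccuracy_strictMono.lt_iff_lt, mul_lt_mul_iff_right₀ (by norm_num),
    sq_lt_sq₀ (by positivity) (by positivity)]
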